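/- arXiv:1512.00715 — 4 statements merged into one kernel-verified Lean document; each statement's English description precedes it below -/
import Mathlib

section
/- Let q, r, ξ₀ be real numbers with q ≠ 0 and r² − 4q < 0, and set s = √(4q − r²). Then on any open interval of ξ where cos(s(ξ+ξ₀)/2) ≠ 0 and (s·tan(s(ξ+ξ₀)/2) − r)/(2q) > 0, the function Φ(ξ) = ln((s·tan(s(ξ+ξ₀)/2) − r)/(2q)) is differentiable and satisfies the auxiliary ODE Φ'(ξ) = exp(−Φ(ξ)) + q·exp(Φ(ξ)) + r. -/
/-!
The substitution `u = exp Φ` turns `Φ' = p * exp (-Φ) + q * exp Φ + r` into the Riccati equation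
`u' = q * u ^ 2 + r * u + p`. Completing the square with `y = 2 * q * u + r` reduces the latter to
`y' = (y ^ 2 + (4 * p * q - r ^ 2)) / 2`, which `y = s * tan (s * (ξ + ξ₀) / 2)` solves when
`s ^ 2 = 4 * p * q - r ^ 2`.
-/

theorem hasDerivAt_log_of_riccati {p q r ξ : ℝ} {u : ℝ → ℝ}
    (hu : HasDerivAt u (q * u ξ ^ 2 + r * u ξ + p) ξ) (hpos : 0 < u ξ) :
    HasDerivAt (fun x => Real.log (u x))
      (p * Real.exp (-Real.log (u ξ)) + q * Real.exp (Real.log (u ξ)) + r) ξ := by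
  refine (hu.log hpos.ne').congr_deriv ?_
  rw [Real.exp_neg, Real.exp_log hpos]
  field_simp [hpos.ne']
  ring

theorem hasDerivAt_riccati_of_completed_square {𝕜 : Type*} [NontriviallyNormedField 𝕜]
    [NeZero (2 : 𝕜)] {p q r ξ : 𝕜} {y : 𝕜 → 𝕜} (hq : q ≠ 0)
    (hy : HasDerivAt y ((y ξ ^ 2 + (4 * p * q - r ^ 2)) / 2) ξ) :
    HasDerivAt (fun x => (y x - r) / (2 * q))
      (q * ((y ξ - r) / (2 * q)) ^ 2 + r * ((y ξ - r) / (2 * q)) + p) ξ := by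
  refine ((hy.sub_const r).div_const (2 * q)).congr_deriv ?_
  have h2 : (2 : 𝕜) ≠ 0 := two_ne_zero
  field_simp
  ring

theorem hasDerivAt_tan_one_add_tan_sq {x : ℝ} (hx : Real.cos x ≠ 0) :
    HasDerivAt Real.tan (1 + Real.tan x ^ 2) x := by
  simpa only [one_div, ← Real.inv_one_add_tan_sq hx, inv_inv] using Real.hasDerivAt_tan hx

theorem hasDerivAt_mul_tan_half {s ξ₀ ξ : ℝ} (hcos : Real.cos (s * (ξ + ξ₀) / 2) ≠ 0) :
    HasDerivAt (fun x => s * Real.tan (s * (x + ξ₀) / 2))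
      (((s * Real.tan (s * (ξ + ξ₀) / 2)) ^ 2 + s ^ 2) / 2) ξ := by
  have hphase : HasDerivAt (fun x => s * (x + ξ₀) / 2) (s * 1 / 2) ξ :=
    (((hasDerivAt_id' ξ).add_const ξ₀).const_mul s).div_const 2
  refine (((hasDerivAt_tan_one_add_tan_sq hcos).comp ξ hphase).const_mul s).congr_deriv ?_
  ring

theorem stmt_1_general {p q r s ξ₀ ξ : ℝ} (hq : q ≠ 0) (hs : s ^ 2 = 4 * p * q - r ^ 2)
    (hcos : Real.cos (s * (ξ + ξ₀) / 2) ≠ 0)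
    (hpos : 0 < (s * Real.tan (s * (ξ + ξ₀) / 2) - r) / (2 * q)) :
    HasDerivAt (fun x => Real.log ((s * Real.tan (s * (x + ξ₀) / 2) - r) / (2 * q)))
      (p * Real.exp (-Real.log ((s * Real.tan (s * (ξ + ξ₀) / 2) - r) / (2 * q)))
        + q * Real.exp (Real.log ((s * Real.tan (s * (ξ + ξ₀) / 2) - r) / (2 * q)))
        + r) ξ := by
  have hy := hasDerivAt_mul_tan_half hcos
  rw [hs] at hy
  exact hasDerivAt_log_of_riccati (hasDerivAt_riccati_of_completed_square hq hy) hpos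

/-- Type 1 solution (9b) of the auxiliary ODE Φ' = exp(-Φ) + q·exp(Φ) + r
with p = 1, q ≠ 0 and r² - 4q < 0. -/
theorem stmt_1 (q r ξ₀ : ℝ) (hq : q ≠ 0) (hdisc : r ^ 2 - 4 * q < 0)
    (s : ℝ) (hs : s = Real.sqrt (4 * q - r ^ 2)) (a b : ℝ)
    (hcos : ∀ ξ ∈ Set.Ioo a b, Real.cos (s * (ξ + ξ₀) / 2) ≠ 0)
    (hpos : ∀ ξ ∈ Set.Ioo a b,
      (s * Real.tan (s * (ξ + ξ₀) / 2) - r) / (2 * q) > 0) :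
    ∀ ξ ∈ Set.Ioo a b,
      HasDerivAt (fun ξ' => Real.log ((s * Real.tan (s * (ξ' + ξ₀) / 2) - r) / (2 * q)))
        (Real.exp (-Real.log ((s * Real.tan (s * (ξ + ξ₀) / 2) - r) / (2 * q)))
          + q * Real.exp (Real.log ((s * Real.tan (s * (ξ + ξ₀) / 2) - r) / (2 * q)))
          + r) ξ := by
  intro ξ hξ
  have hs_sq : s ^ 2 = 4 * 1 * q - r ^ 2 := by
    rw [hs, mul_one, Real.sq_sqrt (by linarith)]
  simpa only [one_mul] using stmt_1_general hq hs_sq (hcos ξ hξ) (hpos ξ hξ)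
end

section
/- Let p, q, r, L, M, B₀ be real numbers with M ≠ 1 and L·M ≠ 1. Suppose Φ is a differentiable real-valued function on an open interval I satisfying the auxiliary ODE Φ'(ξ) = p·exp(−Φ(ξ)) + q·exp(Φ(ξ)) + r for all ξ ∈ I. Define c = −(2LMB₀ − r + Mr − 2B₀)/(M − 1), A₀ = (L − 1)B₀/(M − 1), A₁ = −p(L − 1)/(LM − 1), B₁ = −p(M − 1)/(LM − 1), and set u(ξ) = A₀ + A₁·exp(−Φ(ξ)), v(ξ) = B₀ + B₁·exp(−Φ(ξ)). Then u and v are twice differentiable on I and satisfy c·u' − u'' + 2u·u' + L·(u·v)' = 0 and c·v' − v'' + 2v·v' + M·(u·v)' = 0 on I. -/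
/-!
The function `w = exp (-Φ)` satisfies the Riccati equation `w' = -(p w² + r w + q)`, and so does
(with other coefficients) every affine function `f = α + β w`. If `f' = k f² + c f + d`, then
differentiating once gives the scalar Burgers equation `c f' - f'' + 2 k f f' = 0`.
The ansatz is proportional to one such function: `u = (L - 1) f` and `v = (M - 1) f`.
Since `(L - 1) + L (M - 1) = (M - 1) + M (L - 1) = L M - 1`, both equations of the coupled system
are multiples of the scalar Burgers equation with `k = L M - 1`.
-/

open scoped Topology

section Riccati

variable {𝕜 : Type*} [NontriviallyNormedField 𝕜] {f w : 𝕜 → 𝕜} {x : 𝕜}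

theorem hasDerivAt_deriv_of_autonomous {g : 𝕜 → 𝕜} {g' : 𝕜}
    (hf : ∀ᶠ y in 𝓝 x, HasDerivAt f (g (f y)) y) (hg : HasDerivAt g g' (f x)) :
    HasDerivAt (deriv f) (g' * deriv f x) x := by
  have deriv_eq : deriv f =ᶠ[𝓝 x] g ∘ f := hf.mono fun _ hy ↦ hy.deriv
  exact (hg.comp x hf.self_of_nhds.differentiableAt.hasDerivAt).congr_of_eventuallyEq deriv_eq

theorem hasDerivAt_deriv_of_riccati {k c d : 𝕜}
    (hf : ∀ᶠ y in 𝓝 x, HasDerivAt f (k * f y ^ 2 + c * f y + d) y) :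
    HasDerivAt (deriv f) ((2 * k * f x + c) * deriv f x) x := by
  have hasDerivAt_quadratic :
      HasDerivAt (fun z ↦ k * z ^ 2 + c * z + d) (2 * k * f x + c) (f x) := by
    refine (((((hasDerivAt_id (f x)).pow 2).const_mul k).add
      ((hasDerivAt_id (f x)).const_mul c)).add_const d).congr_deriv ?_
    simp only [id, Nat.cast_ofNat, Nat.add_one_sub_one, pow_one]
    ring
  exact hasDerivAt_deriv_of_autonomous hf hasDerivAt_quadratic

theorem burgers_of_riccati {k c d : 𝕜}
    (hf : ∀ᶠ y in 𝓝 x, HasDerivAt f (k * f y ^ 2 + c * f y + d) y) :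
    c * deriv f x - deriv (deriv f) x + 2 * k * f x * deriv f x = 0 := by
  rw [(hasDerivAt_deriv_of_riccati hf).deriv]
  ring

theorem hasDerivAt_affine_of_riccati {p q r k α β : 𝕜} (hβ : k * β = -p)
    (hw : HasDerivAt w (-(p * w x ^ 2 + r * w x + q)) x) :
    HasDerivAt (fun y ↦ α + β * w y)
      (k * (α + β * w x) ^ 2 + -(r + 2 * k * α) * (α + β * w x)
        + (k * α ^ 2 + r * α - β * q)) x := by
  refine ((hw.const_mul β).const_add α).congr_deriv ?_
  linear_combination (-β * w x ^ 2) * hβ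

theorem differentiableAt_deriv_const_mul (a : 𝕜) (hf : DifferentiableAt 𝕜 (deriv f) x) :
    DifferentiableAt 𝕜 (deriv fun y ↦ a * f y) x := by
  rw [deriv_const_mul_field']
  exact hf.const_mul a

theorem coupled_burgers_of_burgers {a b c k N : 𝕜} (hk : a + N * b = k)
    (hf : DifferentiableAt 𝕜 f x)
    (burgers : c * deriv f x - deriv (deriv f) x + 2 * k * f x * deriv f x = 0) :
    c * deriv (fun y ↦ a * f y) x - deriv (deriv fun y ↦ a * f y) x
      + 2 * (a * f x) * deriv (fun y ↦ a * f y) x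
      + N * deriv (fun y ↦ a * f y * (b * f y)) x = 0 := by
  have deriv_mul_eq :
      deriv (fun y ↦ a * f y * (b * f y)) x = 2 * (a * b) * f x * deriv f x := by
    rw [deriv_fun_mul (hf.const_mul a) (hf.const_mul b)]
    simp only [deriv_const_mul_field]
    ring
  rw [deriv_mul_eq]
  simp only [deriv_const_mul_field']
  linear_combination a * burgers + 2 * a * f x * deriv f x * hk

end Riccati

theorem hasDerivAt_exp_neg_of_exp_ode {p q r ξ : ℝ} {Φ : ℝ → ℝ}
    (hΦ : HasDerivAt Φ (p * Real.exp (-Φ ξ) + q * Real.exp (Φ ξ) + r) ξ) :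
    HasDerivAt (fun x ↦ Real.exp (-Φ x))
      (-(p * Real.exp (-Φ ξ) ^ 2 + r * Real.exp (-Φ ξ) + q)) ξ := by
  have exp_neg_mul_exp : Real.exp (-Φ ξ) * Real.exp (Φ ξ) = 1 := by
    rw [← Real.exp_add, neg_add_cancel, Real.exp_zero]
  refine hΦ.fun_neg.exp.congr_deriv ?_
  linear_combination (-q) * exp_neg_mul_exp

/-- The ansatz u = A₀ + A₁·exp(-Φ), v = B₀ + B₁·exp(-Φ) with the stated
constants solves the traveling-wave coupled Burgers system
c·u' - u'' + 2u·u' + L·(uv)' = 0, c·v' - v'' + 2v·v' + M·(uv)' = 0,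
provided Φ solves the auxiliary ODE. -/
theorem stmt_11 (p q r L M B₀ : ℝ) (hM : M ≠ 1) (hLM : L * M ≠ 1)
    (a b : ℝ) (Φ : ℝ → ℝ)
    (hΦ : ∀ ξ ∈ Set.Ioo a b,
      HasDerivAt Φ (p * Real.exp (-Φ ξ) + q * Real.exp (Φ ξ) + r) ξ)
    (c A₀ A₁ B₁ : ℝ)
    (hc : c = -(2 * L * M * B₀ - r + M * r - 2 * B₀) / (M - 1))
    (hA₀ : A₀ = (L - 1) * B₀ / (M - 1))
    (hA₁ : A₁ = -(p * (L - 1)) / (L * M - 1))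
    (hB₁ : B₁ = -(p * (M - 1)) / (L * M - 1))
    (u v : ℝ → ℝ)
    (hu : u = fun ξ => A₀ + A₁ * Real.exp (-Φ ξ))
    (hv : v = fun ξ => B₀ + B₁ * Real.exp (-Φ ξ)) :
    ∀ ξ ∈ Set.Ioo a b,
      (DifferentiableAt ℝ u ξ ∧ DifferentiableAt ℝ (deriv u) ξ ∧
       DifferentiableAt ℝ v ξ ∧ DifferentiableAt ℝ (deriv v) ξ) ∧
      c * deriv u ξ - deriv (deriv u) ξ + 2 * u ξ * deriv u ξ
        + L * deriv (fun ξ' => u ξ' * v ξ') ξ = 0 ∧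
      c * deriv v ξ - deriv (deriv v) ξ + 2 * v ξ * deriv v ξ
        + M * deriv (fun ξ' => u ξ' * v ξ') ξ = 0 := by
  have hM' : M - 1 ≠ 0 := sub_ne_zero.mpr hM
  have hLM' : L * M - 1 ≠ 0 := sub_ne_zero.mpr hLM
  let f : ℝ → ℝ := fun ξ ↦ B₀ / (M - 1) + -p / (L * M - 1) * Real.exp (-Φ ξ)
  have hu_f : u = fun ξ ↦ (L - 1) * f ξ := by rw [hu, hA₀, hA₁]; funext ξ; ring
  have hv_f : v = fun ξ ↦ (M - 1) * f ξ := by rw [hv, hB₁]; funext ξ; simp only [f]; field_simp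
  have hc_f : c = -(r + 2 * (L * M - 1) * (B₀ / (M - 1))) := by rw [hc]; field_simp; ring
  intro ξ hξ
  obtain ⟨d, riccati⟩ :
      ∃ d, ∀ᶠ x in 𝓝 ξ, HasDerivAt f ((L * M - 1) * f x ^ 2 + c * f x + d) x := by
    rw [hc_f]
    exact ⟨_, (isOpen_Ioo.eventually_mem hξ).mono fun x hx ↦
      hasDerivAt_affine_of_riccati (mul_div_cancel₀ (-p) hLM')
        (hasDerivAt_exp_neg_of_exp_ode (hΦ x hx))⟩
  have hf : DifferentiableAt ℝ f ξ := riccati.self_of_nhds.differentiableAt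
  have hf' : DifferentiableAt ℝ (deriv f) ξ :=
    (hasDerivAt_deriv_of_riccati riccati).differentiableAt
  have burgers := burgers_of_riccati riccati
  rw [hu_f, hv_f]
  refine ⟨⟨hf.const_mul _, differentiableAt_deriv_const_mul _ hf',
    hf.const_mul _, differentiableAt_deriv_const_mul _ hf'⟩,
    coupled_burgers_of_burgers (by ring) hf burgers, ?_⟩
  simp only [mul_comm ((L - 1) * f _)]
  exact coupled_burgers_of_burgers (by ring) hf burgers
end

section
/- Let b, ξ₀ be real numbers. Then the function V : ℝ × ℝ → ℝ defined by V(x,t) = b·tanh(b·x + b³·t + ξ₀) is smooth and satisfies the foam drainage equation ∂V/∂t = (1/2)·V·∂²V/∂x² + 2V²·∂V/∂x + (∂V/∂x)² at every point (x,t) ∈ ℝ × ℝ. -/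
/-!
The wave is a travelling wave `V(x, t) = f (x + b² t)` whose profile `f s = b tanh (b s + ξ₀)`
solves the Riccati equation `f' = b² - f²`. For any profile with `f' = c - f²` one has
`f'' = -2 f f'`, so that `½ f f'' + 2 f² f' + (f')² = f' (f² + f') = c f'`, which is the foam
drainage equation for a wave travelling with velocity `-c`.
-/

open Topology

section TravelingWave

variable {𝕜 : Type*} [NontriviallyNormedField 𝕜]

theorem deriv_comp_const_add_mul_left {E : Type*} [NormedAddCommGroup E] [NormedSpace 𝕜 E]
    (f : 𝕜 → E) (a c t : 𝕜) :
    deriv (fun s => f (a + c * s)) t = c • deriv f (a + c * t) := by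
  rw [deriv_comp_mul_left c (fun y => f (a + y)) t, deriv_comp_const_add]

variable {f : 𝕜 → 𝕜} {c : 𝕜}

theorem deriv_deriv_of_riccati {s : 𝕜} (hf : ∀ᶠ r in 𝓝 s, HasDerivAt f (c - f r ^ 2) r) :
    deriv (deriv f) s = -2 * f s * deriv f s := by
  have deriv_eq : deriv f =ᶠ[𝓝 s] fun r => c - f r ^ 2 := hf.mono fun _ h => h.deriv
  rw [deriv_eq.deriv_eq, deriv_const_sub, deriv_fun_pow hf.self_of_nhds.differentiableAt]
  push_cast
  ring

variable [NeZero (2 : 𝕜)]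

theorem foamDrainage_profile_of_riccati {s : 𝕜}
    (hf : ∀ᶠ r in 𝓝 s, HasDerivAt f (c - f r ^ 2) r) :
    c * deriv f s =
      1 / 2 * f s * deriv (deriv f) s + 2 * f s ^ 2 * deriv f s + deriv f s ^ 2 := by
  have riccati : deriv f s = c - f s ^ 2 := hf.self_of_nhds.deriv
  calc c * deriv f s
      = 1 / 2 * f s * (-2 * f s * deriv f s) + 2 * f s ^ 2 * deriv f s + deriv f s ^ 2 := by
        rw [riccati]
        field_simp [two_ne_zero (α := 𝕜)]
        ring
    _ = 1 / 2 * f s * deriv (deriv f) s + 2 * f s ^ 2 * deriv f s + deriv f s ^ 2 := by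
        rw [deriv_deriv_of_riccati hf]

theorem foamDrainage_travelingWave_of_riccati {V : 𝕜 → 𝕜 → 𝕜} {x t : 𝕜}
    (hV : V = fun x t => f (x + c * t))
    (hf : ∀ᶠ r in 𝓝 (x + c * t), HasDerivAt f (c - f r ^ 2) r) :
    deriv (fun t' => V x t') t =
      1 / 2 * V x t * deriv (deriv (fun x' => V x' t)) x
        + 2 * V x t ^ 2 * deriv (fun x' => V x' t) x
        + deriv (fun x' => V x' t) x ^ 2 := by
  have deriv_x : deriv (fun x' => f (x' + c * t)) = fun x' => deriv f (x' + c * t) :=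
    funext fun x' => deriv_comp_add_const f (c * t) x'
  simp only [hV, deriv_x, deriv_comp_const_add_mul_left, deriv_comp_add_const (deriv f),
    smul_eq_mul]
  exact foamDrainage_profile_of_riccati hf

end TravelingWave

theorem hasDerivAt_tanh (y : ℝ) : HasDerivAt Real.tanh (1 - Real.tanh y ^ 2) y := by
  have cosh_ne_zero : Real.cosh y ≠ 0 := (Real.cosh_pos y).ne'
  rw [funext Real.tanh_eq_sinh_div_cosh]
  refine ((Real.hasDerivAt_sinh y).fun_div (Real.hasDerivAt_cosh y) cosh_ne_zero).congr_deriv ?_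
  field_simp

theorem contDiff_tanh {n : WithTop ℕ∞} : ContDiff ℝ n Real.tanh := by
  rw [funext Real.tanh_eq_sinh_div_cosh]
  exact Real.contDiff_sinh.div Real.contDiff_cosh fun y => (Real.cosh_pos y).ne'

theorem hasDerivAt_const_mul_tanh_affine (b ξ s : ℝ) :
    HasDerivAt (fun r => b * Real.tanh (b * r + ξ))
      (b ^ 2 - (b * Real.tanh (b * s + ξ)) ^ 2) s := by
  have phase : HasDerivAt (fun r => b * r + ξ) b s := (hasDerivAt_const_mul b).add_const ξ
  refine (((hasDerivAt_tanh (b * s + ξ)).comp s phase).const_mul b).congr_deriv ?_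
  ring

/-- V(x,t) = b·tanh(b·x + b³·t + ξ₀) is a smooth exact solution of
the foam drainage equation Vₜ = (1/2)V·Vₓₓ + 2V²·Vₓ + Vₓ². -/
theorem stmt_15 (b ξ₀ : ℝ) (V : ℝ → ℝ → ℝ)
    (hV : V = fun x t => b * Real.tanh (b * x + b ^ 3 * t + ξ₀)) :
    ContDiff ℝ (⊤ : ℕ∞) (fun X : ℝ × ℝ => V X.1 X.2) ∧
    ∀ x t : ℝ,
      deriv (fun t' => V x t') t =
        1 / 2 * V x t * deriv (deriv (fun x' => V x' t)) x
          + 2 * V x t ^ 2 * deriv (fun x' => V x' t) x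
          + deriv (fun x' => V x' t) x ^ 2 := by
  constructor
  · have phase : ContDiff ℝ (⊤ : ℕ∞) fun X : ℝ × ℝ => b * X.1 + b ^ 3 * X.2 + ξ₀ := by fun_prop
    rw [hV]
    exact contDiff_const.mul (contDiff_tanh.comp phase)
  · intro x t
    have travelingWave : V = fun x t => b * Real.tanh (b * (x + b ^ 2 * t) + ξ₀) := by
      rw [hV]
      ring_nf
    exact foamDrainage_travelingWave_of_riccati travelingWave
      (.of_forall (hasDerivAt_const_mul_tanh_affine b ξ₀))
end

section
/- Let b, ξ₀ be real numbers. Then at every point (x,t) ∈ ℝ × ℝ with cos(b·x − b³·t + ξ₀) ≠ 0, the function V(x,t) = −b·tan(b·x − b³·t + ξ₀) satisfies the foam drainage equation ∂V/∂t = (1/2)·V·∂²V/∂x² + 2V²·∂V/∂x + (∂V/∂x)². -/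
/-!
Since `b * x - b ^ 3 * t = b * (x - b ^ 2 * t)`, the function `V` is a wave of velocity `c = b ^ 2`
whose profile `w z = -b tan (b z + ξ₀)` solves the Riccati equation `w' = -(c + w ^ 2)`.
Hence `w'' = -2 w w'`, and the right-hand side of the foam drainage equation collapses:
`w w'' / 2 + 2 w ^ 2 w' + w' ^ 2 = (w ^ 2 + w') w' = -c w'`, which is the time derivative.
-/

open scoped Topology

section TravelingWave

variable {𝕜 : Type*} [NontriviallyNormedField 𝕜]

/-- `V` satisfies the foam drainage equation `Vₜ = (1/2) V Vₓₓ + 2 V² Vₓ + Vₓ²` at the point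
`(x, t)`. The partial derivatives are expressed by `deriv`, so this is meaningful only where they
exist. -/
def FoamDrainageAt (V : 𝕜 → 𝕜 → 𝕜) (x t : 𝕜) : Prop :=
  deriv (fun t' => V x t') t =
    1 / 2 * V x t * deriv (deriv (fun x' => V x' t)) x
      + 2 * V x t ^ 2 * deriv (fun x' => V x' t) x
      + deriv (fun x' => V x' t) x ^ 2

theorem foamDrainageAt_travelingWave_iff (w : 𝕜 → 𝕜) (c x t : 𝕜) :
    FoamDrainageAt (fun x t => w (x - c * t)) x t ↔
      -(c * deriv w (x - c * t)) =
        1 / 2 * w (x - c * t) * deriv (deriv w) (x - c * t)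
          + 2 * w (x - c * t) ^ 2 * deriv w (x - c * t)
          + deriv w (x - c * t) ^ 2 := by
  have deriv_time : deriv (fun t' => w (x - c * t')) t = -(c * deriv w (x - c * t)) := by
    rw [deriv_comp_mul_left c (fun s => w (x - s)) t, deriv_comp_const_sub, smul_eq_mul, mul_neg]
  have deriv_space (f : 𝕜 → 𝕜) :
      deriv (fun x' => f (x' - c * t)) = fun x' => deriv f (x' - c * t) :=
    funext fun x' => deriv_comp_sub_const f (c * t) x'
  simp only [FoamDrainageAt, deriv_time, deriv_space]

theorem hasDerivAt_deriv_of_autonomous_s17 {E : Type*} [NormedAddCommGroup E] [NormedSpace 𝕜 E]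
    {w : 𝕜 → E} {F : E → E} {F' : E →L[𝕜] E} {z : 𝕜}
    (hw : ∀ᶠ y in 𝓝 z, HasDerivAt w (F (w y)) y) (hF : HasFDerivAt F F' (w z)) :
    HasDerivAt (deriv w) (F' (F (w z))) z :=
  (hF.comp_hasDerivAt z hw.self_of_nhds).congr_of_eventuallyEq (hw.mono fun _ h => h.deriv)

theorem deriv_deriv_of_riccati_s17 {w : 𝕜 → 𝕜} {c z : 𝕜}
    (hw : ∀ᶠ y in 𝓝 z, HasDerivAt w (-(c + w y ^ 2)) y) :
    deriv (deriv w) z = -(2 * w z * deriv w z) := by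
  have hF : HasDerivAt (fun v => -(c + v ^ 2)) (-(2 * w z)) (w z) := by
    simpa using ((hasDerivAt_pow 2 (w z)).const_add c).fun_neg
  rw [(hasDerivAt_deriv_of_autonomous_s17 hw hF.hasFDerivAt).deriv, hw.self_of_nhds.deriv]
  simp [mul_comm]

theorem foamDrainageAt_travelingWave_of_riccati [NeZero (2 : 𝕜)] {w : 𝕜 → 𝕜} {c x t : 𝕜}
    (hw : ∀ᶠ y in 𝓝 (x - c * t), HasDerivAt w (-(c + w y ^ 2)) y) :
    FoamDrainageAt (fun x t => w (x - c * t)) x t := by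
  rw [foamDrainageAt_travelingWave_iff, deriv_deriv_of_riccati_s17 hw]
  generalize x - c * t = z at hw ⊢
  have hvelocity : -c = w z ^ 2 + deriv w z := by
    rw [hw.self_of_nhds.deriv]
    ring
  calc
    -(c * deriv w z) = (w z ^ 2 + deriv w z) * deriv w z := by rw [← hvelocity, neg_mul]
    _ = 1 / 2 * w z * -(2 * w z * deriv w z) + 2 * w z ^ 2 * deriv w z + deriv w z ^ 2 := by
      field_simp
      ring

end TravelingWave

theorem hasDerivAt_neg_mul_tan_riccati {b ξ₀ z : ℝ} (hz : Real.cos (b * z + ξ₀) ≠ 0) :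
    HasDerivAt (fun y => -(b * Real.tan (b * y + ξ₀)))
      (-(b ^ 2 + (-(b * Real.tan (b * z + ξ₀))) ^ 2)) z := by
  have hphase : HasDerivAt (fun y => b * y + ξ₀) b z := by
    simpa using ((hasDerivAt_id z).const_mul b).add_const ξ₀
  have hsec : 1 / Real.cos (b * z + ξ₀) ^ 2 = 1 + Real.tan (b * z + ξ₀) ^ 2 := by
    rw [one_div, ← Real.inv_one_add_tan_sq hz, inv_inv]
  refine (((Real.hasDerivAt_tan hz).comp z hphase).const_mul b).fun_neg.congr_deriv ?_
  rw [hsec]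
  ring

/-- V(x,t) = -b·tan(b·x - b³·t + ξ₀) satisfies the foam drainage equation
Vₜ = (1/2)V·Vₓₓ + 2V²·Vₓ + Vₓ² wherever cos(b·x - b³·t + ξ₀) ≠ 0. -/
theorem stmt_17 (b ξ₀ : ℝ) (V : ℝ → ℝ → ℝ)
    (hV : V = fun x t => -(b * Real.tan (b * x - b ^ 3 * t + ξ₀))) :
    ∀ x t : ℝ, Real.cos (b * x - b ^ 3 * t + ξ₀) ≠ 0 →
      deriv (fun t' => V x t') t =
        1 / 2 * V x t * deriv (deriv (fun x' => V x' t)) x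
          + 2 * V x t ^ 2 * deriv (fun x' => V x' t) x
          + deriv (fun x' => V x' t) x ^ 2 := by
  intro x t hcos
  have hphase (x t : ℝ) : b * x - b ^ 3 * t + ξ₀ = b * (x - b ^ 2 * t) + ξ₀ := by ring
  simp only [hphase] at hV hcos
  have hcos_near : ∀ᶠ y in 𝓝 (x - b ^ 2 * t), Real.cos (b * y + ξ₀) ≠ 0 :=
    ContinuousAt.eventually_ne (by fun_prop) hcos
  subst hV
  exact foamDrainageAt_travelingWave_of_riccati
    (w := fun z => -(b * Real.tan (b * z + ξ₀)))
    (hcos_near.mono fun _ => hasDerivAt_neg_mul_tan_riccati)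
end
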